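/- Let U ⊆ ℝⁿ be open, g : U → ℝ^{n×n} smooth symmetric invertible, and suppose m = 1 (one unactuated degree of freedom; write λ^i for λ_1^i). Suppose λ : U → ℝⁿ is smooth and satisfies the λ-equations ∂(g_{1i}λ^i)/∂x^k − 2[k1,i]λ^i = 0 for all k, and ĝ : U → ℝ^{n×n} is smooth symmetric and satisfies the ĝ-equations λ^ℓ ∂ĝ_{ij}/∂x^ℓ + (∂λ^ℓ/∂x^i)ĝ_{ℓj} + (∂λ^ℓ/∂x^j)ĝ_{ℓi} = ∂g_{ij}/∂x¹ for all i,j. Define Ξ_i = g_{1i} − λ^j ĝ_{ji}. Then the transport identity λ^ℓ ∂Ξ_i/∂x^ℓ + (∂λ^ℓ/∂x^i) Ξ_ℓ = 0 holds on U for every i = 1,…,n. -/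

import Mathlib

/-- Partial derivative in the `k`-th coordinate direction. -/
noncomputable def pd {n : ℕ} (k : Fin n) (f : (Fin n → ℝ) → ℝ) (x : Fin n → ℝ) : ℝ :=
  fderiv ℝ f x (Pi.single k 1)

/-- Christoffel symbol of the first kind `[ij,k]` of the matrix-valued map `g`. -/
noncomputable def chr {n : ℕ} (g : (Fin n → ℝ) → Matrix (Fin n) (Fin n) ℝ)
    (i j k : Fin n) (x : Fin n → ℝ) : ℝ :=
  (1/2) * (pd i (fun y => g y j k) x + pd j (fun y => g y i k) x - pd k (fun y => g y i j) x)

/-!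
The λ-equations say that the Lie derivative along `λ` of the one-form `g_{1·}` is the contraction
of `λ` with `∂g/∂x¹`, and the ĝ-equations say that the Lie derivative of `ĝ` along `λ` is
`∂g/∂x¹`. Since `[λ, λ] = 0`, the Leibniz rule makes `λ^j ĝ_{j·}` and `g_{1·}` have the same Lie
derivative, so that of their difference `Ξ` vanishes.
-/

open Filter Matrix Topology VectorField

section PartialDerivative

variable {n : ℕ} {x : Fin n → ℝ}

lemma pd_sub (k : Fin n) {f h : (Fin n → ℝ) → ℝ}
    (hf : DifferentiableAt ℝ f x) (hh : DifferentiableAt ℝ h x) :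
    pd k (fun y => f y - h y) x = pd k f x - pd k h x := by
  simp [pd, fderiv_fun_sub hf hh]

lemma pd_dotProduct {ι : Type*} [Fintype ι] (k : Fin n) {u w : (Fin n → ℝ) → ι → ℝ}
    (hu : DifferentiableAt ℝ u x) (hw : DifferentiableAt ℝ w x) :
    pd k (fun y => u y ⬝ᵥ w y) x =
      ∑ i, (u x i * pd k (fun y => w y i) x + pd k (fun y => u y i) x * w x i) := by
  rw [differentiableAt_pi] at hu hw
  simp only [pd, dotProduct]
  rw [fderiv_fun_sum fun i _ => (hu i).fun_mul (hw i), _root_.sum_apply]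
  refine Finset.sum_congr rfl fun i _ => ?_
  simp [fderiv_fun_mul (hu i) (hw i), mul_comm]

lemma pd_congr_of_eventuallyEq (k : Fin n) {f h : (Fin n → ℝ) → ℝ} (hfh : f =ᶠ[𝓝 x] h) :
    pd k f x = pd k h x := by
  rw [pd, pd, hfh.fderiv_eq]

lemma fderiv_apply_eq_sum_pd (f : (Fin n → ℝ) → ℝ) (v : Fin n → ℝ) :
    fderiv ℝ f x v = ∑ l, v l * pd l f x := by
  conv_lhs => rw [pi_eq_sum_univ' v, map_sum]
  simp [pd]

lemma lieBracket_apply_eq_sum_pd {v w : (Fin n → ℝ) → Fin n → ℝ}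
    (hv : DifferentiableAt ℝ v x) (hw : DifferentiableAt ℝ w x) (j : Fin n) :
    lieBracket ℝ v w x j =
      ∑ l, v x l * pd l (fun y => w y j) x - ∑ l, w x l * pd l (fun y => v y j) x := by
  rw [← fderiv_apply_eq_sum_pd, ← fderiv_apply_eq_sum_pd, fderiv_apply hv, fderiv_apply hw]
  rfl

end PartialDerivative

section LieDerivative

variable {n : ℕ} {x : Fin n → ℝ}

/-- The Lie derivative `L_v ω` of a one-form `ω = ω_i dx^i` along a vector field `v`, in
coordinates. The transport identity is the equation `L_λ Ξ = 0`. -/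
noncomputable def lieDerivOneForm (v ω : (Fin n → ℝ) → Fin n → ℝ) (x : Fin n → ℝ) : Fin n → ℝ :=
  fun i => ∑ l, v x l * pd l (fun y => ω y i) x + ∑ l, pd i (fun y => v y l) x * ω x l

/-- The Lie derivative `L_v h` of a covariant two-tensor `h = h_{ij} dx^i ⊗ dx^j` along a vector
field `v`, in coordinates. The tensor is encoded by its coefficient matrix and need not be
symmetric; its contraction with a vector `w` in the first slot is `w ᵥ* h`. -/
noncomputable def lieDerivTwoTensor (v : (Fin n → ℝ) → Fin n → ℝ)
    (h : (Fin n → ℝ) → Matrix (Fin n) (Fin n) ℝ) (x : Fin n → ℝ) : Matrix (Fin n) (Fin n) ℝ :=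
  Matrix.of fun i j => ∑ l, v x l * pd l (fun y => h y i j) x
    + ∑ l, pd i (fun y => v y l) x * h x l j + ∑ l, pd j (fun y => v y l) x * h x i l

lemma lieDerivOneForm_sub (v : (Fin n → ℝ) → Fin n → ℝ) {ω η : (Fin n → ℝ) → Fin n → ℝ}
    (hω : DifferentiableAt ℝ ω x) (hη : DifferentiableAt ℝ η x) :
    lieDerivOneForm v (fun y => ω y - η y) x = lieDerivOneForm v ω x - lieDerivOneForm v η x := by
  rw [differentiableAt_pi] at hω hη
  ext i
  simp only [lieDerivOneForm, Pi.sub_apply, pd_sub _ (hω i) (hη i), mul_sub,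
    Finset.sum_sub_distrib]
  ring

lemma lieDerivOneForm_vecMul {v w : (Fin n → ℝ) → Fin n → ℝ}
    {h : (Fin n → ℝ) → Matrix (Fin n) (Fin n) ℝ}
    (hv : DifferentiableAt ℝ v x) (hw : DifferentiableAt ℝ w x)
    (hh : ∀ i j, DifferentiableAt ℝ (fun y => h y i j) x) :
    lieDerivOneForm v (fun y => w y ᵥ* h y) x =
      lieBracket ℝ v w x ᵥ* h x + w x ᵥ* lieDerivTwoTensor v h x := by
  ext i
  have hpd (l : Fin n) : pd l (fun y => (w y ᵥ* h y) i) x =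
      ∑ j, (w x j * pd l (fun y => h y j i) x + pd l (fun y => w y j) x * h x j i) :=
    pd_dotProduct l hw <| differentiableAt_pi.mpr fun j => hh j i
  have hcancel : ∑ j, (∑ l, w x l * pd l (fun y => v y j) x) * h x j i =
      ∑ j, w x j * ∑ l, pd j (fun y => v y l) x * h x l i := by
    simp only [Finset.sum_mul, Finset.mul_sum, mul_assoc]
    exact Finset.sum_comm
  calc lieDerivOneForm v (fun y => w y ᵥ* h y) x i
    _ = ∑ l, v x l * ∑ j, (w x j * pd l (fun y => h y j i) x + pd l (fun y => w y j) x * h x j i)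
        + ∑ l, pd i (fun y => v y l) x * ∑ j, w x j * h x j l := by
      simp only [lieDerivOneForm, hpd]
      rfl
    _ = ∑ j, ((∑ l, v x l * pd l (fun y => w y j) x) * h x j i
        + w x j * (∑ l, v x l * pd l (fun y => h y j i) x
          + ∑ l, pd i (fun y => v y l) x * h x j l)) := by
      simp only [Finset.sum_mul, Finset.mul_sum, ← Finset.sum_add_distrib]
      rw [Finset.sum_comm]
      exact Finset.sum_congr rfl fun j _ => Finset.sum_congr rfl fun l _ => by ring
    _ = (lieBracket ℝ v w x ᵥ* h x + w x ᵥ* lieDerivTwoTensor v h x) i := by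
      simp only [Pi.add_apply, vecMul, dotProduct, lieDerivTwoTensor, of_apply,
        lieBracket_apply_eq_sum_pd hv hw, sub_mul, mul_add, Finset.sum_sub_distrib,
        Finset.sum_add_distrib, hcancel]
      ring

lemma lieDerivTwoTensor_apply_of_isSymm (v : (Fin n → ℝ) → Fin n → ℝ)
    {h : (Fin n → ℝ) → Matrix (Fin n) (Fin n) ℝ} (hsymm : (h x).IsSymm) (i j : Fin n) :
    lieDerivTwoTensor v h x i j = ∑ l, v x l * pd l (fun y => h y i j) x
      + ∑ l, pd i (fun y => v y l) x * h x l j + ∑ l, pd j (fun y => v y l) x * h x l i := by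
  simp only [lieDerivTwoTensor, of_apply, hsymm.apply]

lemma pd_dotProduct_sub_two_mul_sum_chr {g : (Fin n → ℝ) → Matrix (Fin n) (Fin n) ℝ}
    {v : (Fin n → ℝ) → Fin n → ℝ} (a k : Fin n)
    (hg : DifferentiableAt ℝ (fun y => g y a) x) (hsymm : ∀ᶠ y in 𝓝 x, (g y).IsSymm)
    (hv : DifferentiableAt ℝ v x) :
    pd k (fun y => g y a ⬝ᵥ v y) x - 2 * ∑ i, chr g k a i x * v x i =
      lieDerivOneForm v (fun y => g y a) x k
        - (v x ᵥ* Matrix.of fun i j => pd a (fun y => g y i j) x) k := by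
  have pd_comm (l i j : Fin n) : pd l (fun y => g y i j) x = pd l (fun y => g y j i) x :=
    pd_congr_of_eventuallyEq l <| hsymm.mono fun y hy => hy.apply j i
  rw [pd_dotProduct k hg hv]
  simp only [chr, lieDerivOneForm, vecMul, dotProduct, of_apply, Finset.mul_sum,
    ← Finset.sum_add_distrib, ← Finset.sum_sub_distrib]
  refine Finset.sum_congr rfl fun i _ => ?_
  rw [pd_comm i k a, pd_comm a k i]
  ring

end LieDerivative

theorem transport_identity_for_Xi_general {n : ℕ} (a : Fin n) {x : Fin n → ℝ}
    {g ghat : (Fin n → ℝ) → Matrix (Fin n) (Fin n) ℝ} {lam : (Fin n → ℝ) → Fin n → ℝ}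
    (hg : DifferentiableAt ℝ (fun y => g y a) x) (hgsym : ∀ᶠ y in 𝓝 x, (g y).IsSymm)
    (hlam : DifferentiableAt ℝ lam x)
    (hghat : ∀ i j, DifferentiableAt ℝ (fun y => ghat y i j) x)
    (hlamEq : ∀ k, pd k (fun y => g y a ⬝ᵥ lam y) x - 2 * ∑ i, chr g k a i x * lam x i = 0)
    (hghatEq : lieDerivTwoTensor lam ghat x = Matrix.of fun i j => pd a (fun y => g y i j) x) :
    lieDerivOneForm lam (fun y => g y a - lam y ᵥ* ghat y) x = 0 := by
  have hcontract : DifferentiableAt ℝ (fun y => lam y ᵥ* ghat y) x :=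
    differentiableAt_pi.mpr fun i => DifferentiableAt.fun_sum (u := .univ) fun j _ =>
      (differentiableAt_pi.mp hlam j).fun_mul (hghat j i)
  have hrow : lieDerivOneForm lam (fun y => g y a) x =
      lam x ᵥ* Matrix.of fun i j => pd a (fun y => g y i j) x := funext fun k =>
    sub_eq_zero.mp <|
      (pd_dotProduct_sub_two_mul_sum_chr a k hg hgsym hlam).symm.trans (hlamEq k)
  rw [lieDerivOneForm_sub lam hg hcontract, lieDerivOneForm_vecMul hlam hlam hghat,
    lieBracket_self, Pi.zero_apply, zero_vecMul, zero_add, hghatEq, hrow, sub_self]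

/-- **Remark 3.2.**  If `λ` solves the λ-equations and `ĝ` solves the ĝ-equations
(`m = 1`), then `Ξ_i = g_{1i} − λ^j ĝ_{ji}` satisfies the transport identity
`λ^ℓ ∂Ξ_i/∂x^ℓ + (∂λ^ℓ/∂x^i) Ξ_ℓ = 0` on `U`. -/
theorem transport_identity_for_Xi
    {n : ℕ} (U : Set (Fin (n+1) → ℝ)) (hUopen : IsOpen U)
    (g ghat : (Fin (n+1) → ℝ) → Matrix (Fin (n+1)) (Fin (n+1)) ℝ)
    (lam : (Fin (n+1) → ℝ) → Fin (n+1) → ℝ)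
    (hg : ∀ i j, ContDiffOn ℝ (⊤ : ℕ∞) (fun x => g x i j) U)
    (hgsym : ∀ x ∈ U, (g x).IsSymm)
    (hginv : ∀ x ∈ U, IsUnit (g x).det)
    (hlam : ∀ i, ContDiffOn ℝ (⊤ : ℕ∞) (fun x => lam x i) U)
    (hghat : ∀ i j, ContDiffOn ℝ (⊤ : ℕ∞) (fun x => ghat x i j) U)
    (hghatsym : ∀ x ∈ U, (ghat x).IsSymm)
    -- the λ-equations:  ∂(g_{1i} λ^i)/∂x^k − 2 [k1,i] λ^i = 0
    (hlamEq : ∀ x ∈ U, ∀ k, pd k (fun y => ∑ i, g y 0 i * lam y i) x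
        - 2 * ∑ i, chr g k 0 i x * lam x i = 0)
    -- the ĝ-equations
    (hghatEq : ∀ x ∈ U, ∀ i j,
        ∑ l, lam x l * pd l (fun y => ghat y i j) x
        + ∑ l, pd i (fun y => lam y l) x * ghat x l j
        + ∑ l, pd j (fun y => lam y l) x * ghat x l i
        = pd 0 (fun y => g y i j) x) :
    -- transport identity for Ξ_i = g_{1i} − λ^j ĝ_{ji}
    ∀ x ∈ U, ∀ i,
      ∑ l, lam x l * pd l (fun y => g y 0 i - ∑ j, lam y j * ghat y j i) x
      + ∑ l, pd i (fun y => lam y l) x * (g x 0 l - ∑ j, lam x j * ghat x j l) = 0 := by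
  intro x hx
  have hdiff {f : (Fin (n + 1) → ℝ) → ℝ} (hf : ContDiffOn ℝ (⊤ : ℕ∞) f U) :
      DifferentiableAt ℝ f x :=
    (hf.contDiffAt (hUopen.mem_nhds hx)).differentiableAt (by simp)
  have hlieDeriv : lieDerivTwoTensor lam ghat x = Matrix.of fun i j => pd 0 (fun y => g y i j) x :=
    Matrix.ext fun i j =>
      (lieDerivTwoTensor_apply_of_isSymm lam (hghatsym x hx) i j).trans (hghatEq x hx i j)
  exact congrFun <| transport_identity_for_Xi_general 0
    (differentiableAt_pi.mpr fun i => hdiff (hg 0 i))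
    (eventually_of_mem (hUopen.mem_nhds hx) hgsym)
    (differentiableAt_pi.mpr fun i => hdiff (hlam i))
    (fun i j => hdiff (hghat i j)) (hlamEq x hx) hlieDeriv
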